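/- Every fair division instance with three agents having separable single-peaked valuations admits an EF1 allocation. -/

import Mathlib

open Finset

/-- Decrement coordinate `j` of a count-vector bundle by one. -/
def decAt {t : ℕ} (B : Fin t → ℕ) (j : Fin t) : Fin t → ℕ :=
  Function.update B j (B j - 1)

/-- EF1 for count-based bundles: any envy can be eliminated by removing a
single item (decrementing one type-count) from one of the two bundles. -/
def EF1c {n t : ℕ} (v : Fin n → (Fin t → ℕ) → ℤ)
    (A : Fin n → Fin t → ℕ) : Prop :=
  ∀ i k, v i (A i) < v i (A k) →
    ∃ j : Fin t, (0 < A i j ∧ v i (decAt (A i) j) ≥ v i (A k)) ∨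
                 (0 < A k j ∧ v i (A i) ≥ v i (decAt (A k) j))

/-!
When `n` agents share a type with `nq`, `nq + 1` or `nq - 1` items, each of them receives `q` items,
except that one distinguished agent receives one item more or one item less; three agents can always
do so. Choosing the distinguished agent of every type amounts to allocating indivisible items (one
per type) with additive values of arbitrary sign, the value of an item being the marginal value of
the deviation.

Such items are allocated by the double round-robin method. In a round-robin on items that everyone
dislikes, ordered so that the last agent of the order picks last, earlier agents do not envy later
ones, and later agents stop envying earlier ones once they drop an item of their own. In a
round-robin on items each liked by someone, where agents pass if they like nothing that is left,
earlier agents do not envy later ones, and later agents stop envying earlier ones once one item of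
the latter is removed. Running the second with the order of the first reversed, each agent envies
each other one in at most one of the two parts.
-/

section AdditiveItems

variable {α ι R : Type*} [DecidableEq α]

section Envy

variable [AddCommMonoid R]

/-- The value, for the additive valuation `u`, of the bundle of agent `k` when the items of `S` are
allocated by `g`. -/
def bundleValue (u : ι → R) (g : ι → α) (S : Finset ι) (k : α) : R :=
  ∑ x ∈ S with g x = k, u x

variable {u : ι → R} {g g' : ι → α} {S T : Finset ι} {x : ι} {k : α}

lemma bundleValue_congr (hg : ∀ x ∈ S, g x = g' x) :
    bundleValue u g S k = bundleValue u g' S k := by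
  unfold bundleValue
  rw [filter_congr fun x hx => by rw [hg x hx]]

lemma bundleValue_insert_of_eq [DecidableEq ι] (hx : x ∉ S) (hk : g x = k) :
    bundleValue u g (insert x S) k = u x + bundleValue u g S k := by
  rw [bundleValue, filter_insert, if_pos hk, sum_insert (by simp [hx]), bundleValue]

lemma bundleValue_insert_of_ne [DecidableEq ι] (hk : g x ≠ k) :
    bundleValue u g (insert x S) k = bundleValue u g S k := by
  rw [bundleValue, filter_insert, if_neg hk, bundleValue]

lemma bundleValue_union [DecidableEq ι] (h : Disjoint S T) :
    bundleValue u g (S ∪ T) k = bundleValue u g S k + bundleValue u g T k := by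
  rw [bundleValue, filter_union, sum_union (disjoint_filter_filter h), bundleValue, bundleValue]

variable [Preorder R]

/-- Agent `i` does not envy agent `k` when the items of `S` are allocated by `g`. -/
def NoEnvy (w : α → ι → R) (g : ι → α) (S : Finset ι) (i k : α) : Prop :=
  bundleValue (w i) g S k ≤ bundleValue (w i) g S i

variable {w : α → ι → R} {a b h i : α}

lemma NoEnvy.congr (hN : NoEnvy w g S i k) (hg : ∀ x ∈ S, g x = g' x) : NoEnvy w g' S i k := by
  rwa [NoEnvy, ← bundleValue_congr hg, ← bundleValue_congr hg]

variable [DecidableEq ι]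

/-- Agent `i` does not envy agent `k`, possibly after one item of agent `h` is removed. Removing a
good corresponds to `h = k`, removing a chore to `h = i`. -/
def NoEnvyUpToItemOf (w : α → ι → R) (g : ι → α) (S : Finset ι) (h i k : α) : Prop :=
  NoEnvy w g S i k ∨ ∃ x ∈ S, g x = h ∧ NoEnvy w g (S.erase x) i k

lemma NoEnvy.insert_of_ne (hN : NoEnvy w g S i k) (hi : g x ≠ i) (hk : g x ≠ k) :
    NoEnvy w g (insert x S) i k := by
  rwa [NoEnvy, bundleValue_insert_of_ne hi, bundleValue_insert_of_ne hk]

lemma NoEnvyUpToItemOf.congr (hN : NoEnvyUpToItemOf w g S h i k) (hg : ∀ x ∈ S, g x = g' x) :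
    NoEnvyUpToItemOf w g' S h i k := by
  rcases hN with hN | ⟨x, hx, hxh, hN⟩
  · exact .inl (hN.congr hg)
  · exact .inr ⟨x, hx, hg x hx ▸ hxh, hN.congr fun y hy => hg y (mem_of_mem_erase hy)⟩

lemma NoEnvyUpToItemOf.insert_of_ne (hN : NoEnvyUpToItemOf w g S h i k) (hx : x ∉ S)
    (hi : g x ≠ i) (hk : g x ≠ k) : NoEnvyUpToItemOf w g (insert x S) h i k := by
  rcases hN with hN | ⟨y, hy, hyh, hN⟩
  · exact .inl (hN.insert_of_ne hi hk)
  · refine .inr ⟨y, mem_insert_of_mem hy, hyh, ?_⟩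
    rw [erase_insert_of_ne (ne_of_mem_of_not_mem hy hx).symm]
    exact hN.insert_of_ne hi hk

lemma NoEnvy.upToItemOf_insert (hN : NoEnvy w g S i k) (hx : x ∉ S) :
    NoEnvyUpToItemOf w g (insert x S) (g x) i k :=
  .inr ⟨x, mem_insert_self x S, rfl, by rwa [erase_insert hx]⟩

variable [IsOrderedAddMonoid R]

lemma NoEnvy.union (hS : NoEnvy w g S i k) (hT : NoEnvy w g T i k) (hST : Disjoint S T) :
    NoEnvy w g (S ∪ T) i k := by
  rw [NoEnvy, bundleValue_union hST, bundleValue_union hST]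
  exact add_le_add hS hT

lemma NoEnvyUpToItemOf.union (hS : NoEnvyUpToItemOf w g S h i k) (hT : NoEnvy w g T i k)
    (hST : Disjoint S T) : NoEnvyUpToItemOf w g (S ∪ T) h i k := by
  rcases hS with hS | ⟨x, hx, hxh, hS⟩
  · exact .inl (hS.union hT hST)
  · refine .inr ⟨x, mem_union_left T hx, hxh, ?_⟩
    rw [erase_union_distrib, erase_eq_of_notMem (disjoint_left.1 hST hx)]
    exact hS.union hT (hST.mono_left (erase_subset x S))

lemma NoEnvyUpToItemOf.noEnvy_insert_good (hN : NoEnvyUpToItemOf w g S b a b) (hab : a ≠ b)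
    (hx : x ∉ S) (hgx : g x = a) (hnonneg : 0 ≤ w a x) (hmax : ∀ y ∈ S, w a y ≤ w a x) :
    NoEnvy w g (insert x S) a b := by
  rw [NoEnvy, bundleValue_insert_of_eq hx hgx, bundleValue_insert_of_ne (hgx ▸ hab)]
  rcases hN with hN | ⟨y, hy, hyb, hN⟩
  · exact le_add_of_nonneg_of_le hnonneg hN
  · rw [← insert_erase hy, bundleValue_insert_of_eq (notMem_erase y S) hyb,
      bundleValue_insert_of_ne (hyb ▸ hab.symm)]
    exact add_le_add (hmax y hy) hN

lemma NoEnvyUpToItemOf.noEnvy_insert_chore (hN : NoEnvyUpToItemOf w g S b b a) (hab : a ≠ b)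
    (hx : x ∉ S) (hgx : g x = a) (hnonpos : w b x ≤ 0) (hmin : ∀ y ∈ S, g y = b → w b x ≤ w b y) :
    NoEnvy w g (insert x S) b a := by
  rw [NoEnvy, bundleValue_insert_of_eq hx hgx, bundleValue_insert_of_ne (hgx ▸ hab)]
  rcases hN with hN | ⟨y, hy, hyb, hN⟩
  · exact add_le_of_nonpos_of_le hnonpos hN
  · rw [← insert_erase hy, bundleValue_insert_of_eq (notMem_erase y S) hyb,
      bundleValue_insert_of_ne (hyb ▸ hab.symm)]
    exact add_le_add (hmin y hy hyb) hN

end Envy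

section RoundRobin

variable [DecidableEq ι] [AddCommMonoid R] [Preorder R]
  {w : α → ι → R} {g g' : ι → α} {S P : Finset ι} {x : ι} {a : α} {l : List α}

/-- What is needed of the outcome `g` of a round-robin on the goods `S` in which the agents of `l`
pick cyclically in this order, each passing when she dislikes everything that is left: the value of
each bundle to its owner, and the envy along `l`. -/
structure IsGoodsRoundRobin (w : α → ι → R) (g : ι → α) (S : Finset ι) (l : List α) : Prop where
  nonneg : ∀ i, 0 ≤ bundleValue (w i) g S i
  pairwise : l.Pairwise fun i k => NoEnvy w g S i k ∧ NoEnvyUpToItemOf w g S i k i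

/-- What is needed of an interrupted round-robin on chores: `g` allocates the items of `S` as picked
so far, the items of `P` are left, and `l` is the order in which the agents pick next. -/
structure IsChoresRoundRobin (w : α → ι → R) (g : ι → α) (S P : Finset ι) (l : List α) :
    Prop where
  greedy : ∀ x ∈ S, ∀ y ∈ P, w (g x) y ≤ w (g x) x
  pairwise : l.Pairwise fun i k => NoEnvy w g S i k ∧ NoEnvyUpToItemOf w g S k k i

namespace IsGoodsRoundRobin

lemma congr (hR : IsGoodsRoundRobin w g S l) (hg : ∀ x ∈ S, g x = g' x) :
    IsGoodsRoundRobin w g' S l where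
  nonneg i := (hR.nonneg i).trans_eq (bundleValue_congr hg)
  pairwise := hR.pairwise.imp fun h => ⟨h.1.congr hg, h.2.congr hg⟩

variable [IsOrderedAddMonoid R]

lemma pass (hR : IsGoodsRoundRobin w g S (l ++ [a])) (hneg : ∀ x ∈ S, w a x ≤ 0) :
    IsGoodsRoundRobin w g S (a :: l) where
  nonneg := hR.nonneg
  pairwise := by
    obtain ⟨hl, -, hla⟩ := List.pairwise_append.1 hR.pairwise
    refine List.pairwise_cons.2 ⟨fun b hb => ⟨?_, .inl (hla b hb a (by simp)).1⟩, hl⟩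
    have hb0 : bundleValue (w a) g S b ≤ 0 := sum_nonpos fun x hx => hneg x (mem_filter.1 hx).1
    exact hb0.trans (hR.nonneg a)

lemma pick (hR : IsGoodsRoundRobin w g S (l ++ [a])) (ha : a ∉ l) (hx : x ∉ S) (hgx : g x = a)
    (hnonneg : 0 ≤ w a x) (hmax : ∀ y ∈ S, w a y ≤ w a x) :
    IsGoodsRoundRobin w g (insert x S) (a :: l) where
  nonneg i := by
    by_cases hi : g x = i
    · rw [bundleValue_insert_of_eq hx hi]
      exact add_nonneg (hi ▸ hgx ▸ hnonneg) (hR.nonneg i)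
    · rw [bundleValue_insert_of_ne hi]
      exact hR.nonneg i
  pairwise := by
    obtain ⟨hl, -, hla⟩ := List.pairwise_append.1 hR.pairwise
    have hne : ∀ b ∈ l, a ≠ b := fun b hb => (ne_of_mem_of_not_mem hb ha).symm
    have hgne : ∀ b ∈ l, g x ≠ b := hgx ▸ hne
    refine List.pairwise_cons.2 ⟨fun b hb => ?_, hl.imp_of_mem fun hi hk h => ?_⟩
    · obtain ⟨hba, hab⟩ := hla b hb a (by simp)
      exact ⟨hab.noEnvy_insert_good (hne b hb) hx hgx hnonneg hmax,
        hgx ▸ hba.upToItemOf_insert hx⟩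
    · exact ⟨h.1.insert_of_ne (hgne _ hi) (hgne _ hk),
        h.2.insert_of_ne hx (hgne _ hk) (hgne _ hi)⟩

end IsGoodsRoundRobin

namespace IsChoresRoundRobin

lemma congr (hR : IsChoresRoundRobin w g S P l) (hg : ∀ x ∈ S, g x = g' x) :
    IsChoresRoundRobin w g' S P l where
  greedy x hx := hg x hx ▸ hR.greedy x hx
  pairwise := hR.pairwise.imp fun h => ⟨h.1.congr hg, h.2.congr hg⟩

variable [IsOrderedAddMonoid R]

lemma pick (hR : IsChoresRoundRobin w g S P (a :: l)) (ha : a ∉ l) (hxS : x ∉ S) (hxP : x ∈ P)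
    (hgx : g x = a) (hnonpos : ∀ i, w i x ≤ 0) (hmax : ∀ y ∈ P, w a y ≤ w a x) :
    IsChoresRoundRobin w g (insert x S) (P.erase x) (l ++ [a]) where
  greedy := by
    refine forall_mem_insert _ _ _ |>.2 ⟨fun y hy => ?_, fun z hz y hy => ?_⟩
    · exact hgx ▸ hmax y (mem_of_mem_erase hy)
    · exact hR.greedy z hz y (mem_of_mem_erase hy)
  pairwise := by
    obtain ⟨hal, hl⟩ := List.pairwise_cons.1 hR.pairwise
    have hne : ∀ b ∈ l, a ≠ b := fun b hb => (ne_of_mem_of_not_mem hb ha).symm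
    have hgne : ∀ b ∈ l, g x ≠ b := hgx ▸ hne
    refine List.pairwise_append.2 ⟨hl.imp_of_mem fun hi hk h => ?_, List.pairwise_singleton _ a,
      fun b hb c hc => ?_⟩
    · exact ⟨h.1.insert_of_ne (hgne _ hi) (hgne _ hk),
        h.2.insert_of_ne hxS (hgne _ hk) (hgne _ hi)⟩
    · obtain rfl : c = a := List.mem_singleton.1 hc
      obtain ⟨hcb, hbc⟩ := hal b hb
      -- What `b` holds was picked while `x` was still available.
      exact ⟨hbc.noEnvy_insert_chore (hne b hb) hxS hgx (hnonpos b)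
        fun y hy hyb => hyb ▸ hR.greedy y hy x hxP, hgx ▸ hcb.upToItemOf_insert hxS⟩

end IsChoresRoundRobin

end RoundRobin

section Existence

variable [DecidableEq ι] [AddCommMonoid R] [LinearOrder R] [IsOrderedAddMonoid R]
  {w : α → ι → R} {g : ι → α} {S P : Finset ι} {a : α} {l : List α}

lemma exists_isGoodsRoundRobin_cons (hl : (a :: l).Nodup) (hlike : ∃ x ∈ S, 0 ≤ w a x)
    (ih : ∀ x ∈ S, ∃ g, IsGoodsRoundRobin w g (S.erase x) (l ++ [a])) :
    ∃ g, IsGoodsRoundRobin w g S (a :: l) := by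
  obtain ⟨z, hz, hz0⟩ := hlike
  obtain ⟨x, hx, hmax⟩ := exists_max_image S (w a) ⟨z, hz⟩
  obtain ⟨g, hg⟩ := ih x hx
  have hg' : IsGoodsRoundRobin w (Function.update g x a) (S.erase x) (l ++ [a]) :=
    hg.congr fun y hy => (Function.update_of_ne (ne_of_mem_erase hy) a g).symm
  refine ⟨Function.update g x a, insert_erase hx ▸ ?_⟩
  exact hg'.pick (List.nodup_cons.1 hl).1 (notMem_erase x S) (Function.update_self x a g)
    (hz0.trans (hmax z hz)) fun y hy => hmax y (mem_of_mem_erase hy)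

lemma exists_isGoodsRoundRobin_append {l₁ l₂ : List α} (hl : (l₁ ++ a :: l₂).Nodup)
    (hlike : ∃ x ∈ S, 0 ≤ w a x)
    (ih : ∀ l, l.Perm (l₁ ++ a :: l₂) → ∀ x ∈ S, ∃ g, IsGoodsRoundRobin w g (S.erase x) l) :
    ∃ g, IsGoodsRoundRobin w g S (l₁ ++ a :: l₂) := by
  induction l₁ generalizing l₂ with
  | nil => exact exists_isGoodsRoundRobin_cons hl hlike (ih _ (List.perm_append_singleton a l₂))
  | cons b l₁ ihl =>
    have hperm : (l₁ ++ a :: l₂ ++ [b]).Perm (b :: l₁ ++ a :: l₂) :=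
      List.perm_append_singleton b _
    by_cases hb : ∃ x ∈ S, 0 ≤ w b x
    · exact exists_isGoodsRoundRobin_cons hl hb (ih _ hperm)
    · push Not at hb
      have hassoc : l₁ ++ a :: l₂ ++ [b] = l₁ ++ a :: (l₂ ++ [b]) := by simp
      rw [hassoc] at hperm
      obtain ⟨g, hg⟩ := ihl (hperm.nodup_iff.2 hl) fun l h => ih l (h.trans hperm)
      exact ⟨g, (hassoc ▸ hg).pass fun x hx => (hb x hx).le⟩

lemma exists_isGoodsRoundRobin [Nonempty α] (S : Finset ι) (l : List α) (hl : l.Nodup)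
    (hlike : ∀ x ∈ S, ∃ i ∈ l, 0 ≤ w i x) : ∃ g, IsGoodsRoundRobin w g S l := by
  induction S using Finset.strongInduction generalizing l with
  | H S ih =>
    rcases S.eq_empty_or_nonempty with rfl | ⟨x, hx⟩
    · refine ⟨fun _ => Classical.arbitrary α, fun i => by simp [bundleValue], ?_⟩
      exact List.pairwise_of_forall fun i k => by simp [NoEnvyUpToItemOf, NoEnvy, bundleValue]
    · obtain ⟨a, ha, hax⟩ := hlike x hx
      obtain ⟨l₁, l₂, rfl⟩ := List.append_of_mem ha
      refine exists_isGoodsRoundRobin_append hl ⟨x, hx, hax⟩ fun l hperm y hy => ?_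
      refine ih _ (erase_ssubset hy) l (hperm.nodup_iff.2 hl) fun z hz => ?_
      obtain ⟨i, hi, hiz⟩ := hlike z (mem_of_mem_erase hz)
      exact ⟨i, hperm.mem_iff.2 hi, hiz⟩

lemma IsChoresRoundRobin.exists_complete (hR : IsChoresRoundRobin w g S P l) (hl : l.Nodup)
    (hne : l ≠ []) (hSP : Disjoint S P) (hnonpos : ∀ x ∈ P, ∀ i, w i x ≤ 0) :
    ∃ g' l', l'.Perm l ∧ IsChoresRoundRobin w g' (S ∪ P) ∅ l' := by
  induction P using Finset.strongInduction generalizing g S l with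
  | H P ih =>
    rcases P.eq_empty_or_nonempty with rfl | hP
    · exact ⟨g, l, .refl l, by rwa [union_empty]⟩
    obtain ⟨a, l, rfl⟩ := List.exists_cons_of_ne_nil hne
    obtain ⟨x, hx, hmax⟩ := exists_max_image P (w a) hP
    have hxS : x ∉ S := disjoint_right.1 hSP hx
    have hR' : IsChoresRoundRobin w (Function.update g x a) S P (a :: l) :=
      hR.congr fun y hy => (Function.update_of_ne (ne_of_mem_of_not_mem hy hxS) a g).symm
    have hperm : (l ++ [a]).Perm (a :: l) := List.perm_append_singleton a l
    obtain ⟨g', l', hl', hg'⟩ := ih _ (erase_ssubset hx)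
      (hR'.pick (List.nodup_cons.1 hl).1 hxS hx (Function.update_self x a g) (hnonpos x hx) hmax)
      (hperm.nodup_iff.2 hl) (by simp)
      (disjoint_insert_left.2 ⟨notMem_erase x P, hSP.mono_right (erase_subset x P)⟩)
      fun y hy => hnonpos y (mem_of_mem_erase hy)
    rw [insert_union, ← union_insert, insert_erase hx] at hg'
    exact ⟨g', l', hl'.trans hperm, hg'⟩

variable [Finite α] [Nonempty α]

lemma exists_isChoresRoundRobin (hnonpos : ∀ x ∈ S, ∀ i, w i x ≤ 0) :
    ∃ g l, l.Nodup ∧ (∀ i : α, i ∈ l) ∧ IsChoresRoundRobin w g S ∅ l := by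
  cases nonempty_fintype α
  have hstart : IsChoresRoundRobin w (fun _ => Classical.arbitrary α) ∅ S univ.toList :=
    ⟨by simp, List.pairwise_of_forall fun i k => by simp [NoEnvyUpToItemOf, NoEnvy, bundleValue]⟩
  obtain ⟨g, l, hperm, hg⟩ := hstart.exists_complete (nodup_toList univ)
    (by simpa using univ_nonempty.ne_empty) (disjoint_empty_left S) hnonpos
  rw [empty_union] at hg
  exact ⟨g, l, hperm.nodup_iff.2 (nodup_toList univ), fun i => hperm.mem_iff.2 (by simp), hg⟩

theorem exists_noEnvyUpToItemOf (w : α → ι → R) (S : Finset ι) :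
    ∃ g : ι → α, ∀ i k, NoEnvyUpToItemOf w g S i i k ∨ NoEnvyUpToItemOf w g S k i k := by
  classical
  let G : Finset ι := S.filter fun x => ∃ i, 0 ≤ w i x
  let C : Finset ι := S.filter fun x => ¬ ∃ i, 0 ≤ w i x
  have hGC : Disjoint G C := disjoint_filter_filter_not S S _
  have hunion : G ∪ C = S := filter_union_filter_not_eq _ S
  obtain ⟨gC, l, hl, hmem, hC⟩ := exists_isChoresRoundRobin (w := w) (S := C) fun x hx i =>
    le_of_not_ge fun hi => (mem_filter.1 hx).2 ⟨i, hi⟩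
  obtain ⟨gG, hG⟩ := exists_isGoodsRoundRobin (w := w) G l.reverse (List.nodup_reverse.2 hl)
    fun x hx => (mem_filter.1 hx).2.imp fun i hi => ⟨List.mem_reverse.2 (hmem i), hi⟩
  let g : ι → α := G.piecewise gG gC
  have hC' : IsChoresRoundRobin w g C ∅ l :=
    hC.congr fun x hx => (piecewise_eq_of_notMem G gG gC (disjoint_right.1 hGC hx)).symm
  have hG' : IsGoodsRoundRobin w g G l.reverse :=
    hG.congr fun x hx => (piecewise_eq_of_mem G gG gC hx).symm
  let EF1 (i k : α) : Prop := NoEnvyUpToItemOf w g S i i k ∨ NoEnvyUpToItemOf w g S k i k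
  have hpair : l.Pairwise fun i k => EF1 i k ∧ EF1 k i := by
    refine ((List.pairwise_reverse.1 hG'.pairwise).and hC'.pairwise).imp ?_
    rintro i k ⟨⟨hGki, hGik⟩, hCik, hCki⟩
    exact ⟨.inr (hunion ▸ hGik.union hCik hGC),
      .inl (hunion ▸ union_comm C G ▸ hCki.union hGki hGC.symm)⟩
  exact ⟨g, fun i k => List.Pairwise.forall_of_forall_of_flip (R := EF1)
    (fun i _ => .inl (.inl le_rfl)) (hpair.imp And.left) (hpair.imp And.right) (hmem i) (hmem k)⟩

end Existence

end AdditiveItems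

section SeparableValuations

variable {n t : ℕ}

lemma sum_decAt (F : Fin t → ℕ → ℤ) (B : Fin t → ℕ) (j : Fin t) :
    ∑ l, F l (decAt B j l) = ∑ l, F l (B l) - F j (B j) + F j (B j - 1) := by
  have hoff : ∑ l ∈ univ.erase j, F l (decAt B j l) = ∑ l ∈ univ.erase j, F l (B l) :=
    sum_congr rfl fun l hl => by rw [decAt, Function.update_of_ne (ne_of_mem_erase hl)]
  rw [← add_sum_erase univ _ (mem_univ j), hoff, ← add_sum_erase univ _ (mem_univ j), decAt,
    Function.update_self]
  ring

lemma decAt_of_envy_le_coord {F : Fin t → ℕ → ℤ} {B C : Fin t → ℕ} {j : Fin t}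
    (hBC : B j ≤ C j + 1) (hCB : C j ≤ B j + 1) (henvy : ∑ l, F l (B l) < ∑ l, F l (C l))
    (hcoord : ∑ l, F l (C l) - ∑ l, F l (B l) ≤ F j (C j) - F j (B j)) :
    (0 < B j ∧ ∑ l, F l (decAt B j l) ≥ ∑ l, F l (C l)) ∨
      (0 < C j ∧ ∑ l, F l (B l) ≥ ∑ l, F l (decAt C j l)) := by
  have hne : B j ≠ C j := fun h => by rw [h] at hcoord; omega
  rw [sum_decAt, sum_decAt]
  rcases lt_or_gt_of_ne hne with hlt | hgt
  · rw [show C j - 1 = B j by omega]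
    exact .inr ⟨by omega, by omega⟩
  · rw [show B j - 1 = C j by omega]
    exact .inl ⟨by omega, by omega⟩

lemma sum_ite_eq_sum_add_bundleValue (F : Fin t → ℕ → ℤ) (a b : Fin t → ℕ) (g : Fin t → Fin n)
    (S : Finset (Fin t)) (k : Fin n) :
    ∑ j ∈ S, F j (if g j = k then b j else a j) =
      ∑ j ∈ S, F j (a j) + bundleValue (fun j => F j (b j) - F j (a j)) g S k := by
  rw [bundleValue, sum_filter, ← sum_add_distrib]
  refine sum_congr rfl fun j _ => ?_
  split_ifs <;> ring

theorem exists_EF1c_ite [NeZero n] (f : Fin n → Fin t → ℕ → ℤ) {a b : Fin t → ℕ}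
    (hab : ∀ j, a j ≤ b j + 1) (hba : ∀ j, b j ≤ a j + 1) :
    ∃ g : Fin t → Fin n,
      EF1c (fun i B => ∑ j, f i j (B j)) fun i j => if g j = i then b j else a j := by
  let w : Fin n → Fin t → ℤ := fun i j => f i j (b j) - f i j (a j)
  obtain ⟨g, hg⟩ := exists_noEnvyUpToItemOf w univ
  refine ⟨g, fun i k henvy => ?_⟩
  let A : Fin n → Fin t → ℕ := fun i j => if g j = i then b j else a j
  have hvalue (S : Finset (Fin t)) (h : Fin n) :
      ∑ j ∈ S, f i j (A h j) = ∑ j ∈ S, f i j (a j) + bundleValue (w i) g S h :=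
    sum_ite_eq_sum_add_bundleValue (f i) a b g S h
  have hnot : ¬ NoEnvy w g univ i k := fun hN =>
    henvy.not_ge (by
      change ∑ j, f i j (A k j) ≤ ∑ j, f i j (A i j)
      rw [hvalue, hvalue]
      exact add_le_add_right hN _)
  obtain ⟨x, hx⟩ : ∃ x, NoEnvy w g (univ.erase x) i k := by
    rcases hg i k with (hN | ⟨x, -, -, hx⟩) | (hN | ⟨x, -, -, hx⟩)
    exacts [absurd hN hnot, ⟨x, hx⟩, absurd hN hnot, ⟨x, hx⟩]
  have hrest : ∑ j ∈ univ.erase x, f i j (A k j) ≤ ∑ j ∈ univ.erase x, f i j (A i j) := by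
    rw [hvalue, hvalue]
    exact add_le_add_right hx _
  have hcoord : ∑ j, f i j (A k j) - ∑ j, f i j (A i j) ≤ f i x (A k x) - f i x (A i x) := by
    rw [← add_sum_erase univ _ (mem_univ x), ← add_sum_erase univ _ (mem_univ x)]
    linarith
  have hclose (h h' : Fin n) : A h x ≤ A h' x + 1 := by
    have := hab x
    have := hba x
    simp only [A]
    split_ifs <;> omega
  exact ⟨x, decAt_of_envy_le_coord (hclose i k) (hclose k i) henvy hcoord⟩

lemma sum_ite_eq_add (i₀ : Fin n) (a b : ℕ) :
    ∑ i, (if i₀ = i then b else a) + a = n * a + b := by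
  have hoff : ∑ i ∈ univ.erase i₀, (if i₀ = i then b else a) = ∑ _i ∈ univ.erase i₀, a :=
    sum_congr rfl fun i hi => if_neg (ne_of_mem_erase hi).symm
  rw [← add_sum_erase univ _ (mem_univ i₀), if_pos rfl, hoff, add_assoc,
    sum_erase_add univ _ (mem_univ i₀), sum_const, card_univ, Fintype.card_fin, smul_eq_mul,
    add_comm]

end SeparableValuations

theorem stmt18_general {n t : ℕ} [NeZero n] (m : Fin t → ℕ)
    (hm : ∀ j, ∃ q, m j = n * q ∨ m j = n * q + 1 ∨ m j + 1 = n * q)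
    (f : Fin n → Fin t → ℕ → ℤ) (v : Fin n → (Fin t → ℕ) → ℤ)
    (hv : ∀ i B, v i B = ∑ j, f i j (B j)) :
    ∃ A : Fin n → Fin t → ℕ, (∀ j, ∑ i, A i j = m j) ∧ EF1c v A := by
  have hab : ∀ j, ∃ a b, n * a + b = m j + a ∧ a ≤ b + 1 ∧ b ≤ a + 1 := fun j => by
    obtain ⟨q, hq | hq | hq⟩ := hm j
    · exact ⟨q, q, by omega⟩
    · exact ⟨q, q + 1, by omega⟩
    · have hq0 : q ≠ 0 := by rintro rfl; omega
      exact ⟨q, q - 1, by omega⟩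
  choose a b hsum hab hba using hab
  obtain ⟨g, hg⟩ := exists_EF1c_ite f hab hba
  obtain rfl : v = fun i B => ∑ j, f i j (B j) := funext₂ hv
  refine ⟨_, fun j => ?_, hg⟩
  exact Nat.add_right_cancel ((sum_ite_eq_add (g j) (a j) (b j)).trans (hsum j))

theorem stmt18 {t : ℕ} (m : Fin t → ℕ)
    (f : Fin 3 → Fin t → ℕ → ℤ) (θ : Fin 3 → Fin t → ℕ)
    -- each f i j is single-peaked with peak θ i j
    (hup : ∀ i j, ∀ x y : ℕ, x ≤ y → y ≤ θ i j → f i j x ≤ f i j y)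
    (hdown : ∀ i j, ∀ x y : ℕ, θ i j ≤ x → x ≤ y → f i j x ≥ f i j y)
    (v : Fin 3 → (Fin t → ℕ) → ℤ)
    (hv : ∀ i B, v i B = ∑ j, f i j (B j)) :
    ∃ A : Fin 3 → Fin t → ℕ, (∀ j, ∑ i, A i j = m j) ∧ EF1c v A :=
  stmt18_general m (fun j => ⟨(m j + 1) / 3, by omega⟩) f v hv
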